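/- arXiv:2102.04041 — 2 statements merged into one kernel-verified Lean document; each statement's English description precedes it below -/
import Mathlib

section
/- Let r ≥ 1 be an integer and let n be an integer with n ≥ 10r if r is odd and n ≥ 7r if r is even. Then ex(n, θ_{r+1}) = ⌊n²/4⌋. -/
open SimpleGraph Finset

attribute [local instance] Classical.propDecidable

/-- The spectral radius (largest adjacency eigenvalue) of a graph on `Fin n`. -/
noncomputable def adjSpectralRadius {n : ℕ} (G : SimpleGraph (Fin n)) : ℝ :=
  sSup (spectrum ℝ (G.adjMatrix ℝ))

/-- `G` contains a copy of `H` (a subgraph isomorphic to `H`). -/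
def Contains {α β : Type*} (G : SimpleGraph α) (H : SimpleGraph β) : Prop :=
  ∃ f : β ↪ α, ∀ a b, H.Adj a b → G.Adj (f a) (f b)

/-- The book `B_s`: `s` triangles sharing a common edge, i.e. `K_{2,s}` plus the
edge inside the part of size two. -/
def book (s : ℕ) : SimpleGraph (Fin 2 ⊕ Fin s) :=
  SimpleGraph.fromRel (fun x _ => x.isLeft = true)

/-- The theta graph `θ_{r+1} = θ(1,2,r+1)`: vertices `0,…,r+1` form a path of length
`r+1`, the edge `0 ~ (r+1)`, and vertex `r+2` is adjacent to `0` and `r+1`. -/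
def theta (r : ℕ) : SimpleGraph (Fin (r + 3)) :=
  SimpleGraph.fromRel (fun x y =>
    (x.val + 1 = y.val ∧ y.val ≤ r + 1) ∨
    (x.val = 0 ∧ y.val = r + 1) ∨
    (x.val = r + 2 ∧ (y.val = 0 ∨ y.val = r + 1)))

/-- The number of edges of a graph. -/
noncomputable def edgeCount {V : Type*} (G : SimpleGraph V) : ℕ := G.edgeSet.ncard

/-- The number of ordered pairs `(a,b) ∈ s × t` with `a ~ b`.  For disjoint `s` and `t`
this is the number `e(s,t)` of edges between `s` and `t`; for `s = t` it is `2·e(s)`. -/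
noncomputable def ordPairs {V : Type*} (G : SimpleGraph V) (s t : Finset V) : ℕ :=
  ((s ×ˢ t).filter fun p => G.Adj p.1 p.2).card

/-- The number of edges inside a vertex subset `s`. -/
noncomputable def edgesIn {V : Type*} (G : SimpleGraph V) (s : Finset V) : ℕ :=
  (G.induce (s : Set V)).edgeSet.ncard

section helpers

theorem sdr_exists {V : Type*} (m : ℕ) (T : ℕ → Finset V) (h : ∀ i < m, m ≤ (T i).card)
    [Nonempty V] :
    ∃ f : ℕ → V, (∀ i < m, f i ∈ T i) ∧ (∀ i < m, ∀ j < m, f i = f j → i = j) := by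
  suffices H : ∀ k ≤ m, ∃ f : ℕ → V, (∀ i < k, f i ∈ T i) ∧
      (∀ i < k, ∀ j < k, f i = f j → i = j) from H m le_rfl
  intro k
  induction k with
  | zero => intro _; exact ⟨fun _ => Classical.arbitrary V, by simp, by simp⟩
  | succ k ih =>
    intro hk
    obtain ⟨f, hf, hinj⟩ := ih (by omega)
    have hc : ((Finset.range k).image f).card < (T k).card := by
      have := Finset.card_image_le (s := Finset.range k) (f := f)
      have h2 := h k (by omega)
      simp at this
      omega
    obtain ⟨x, hx, hx'⟩ := Finset.exists_mem_notMem_of_card_lt_card hc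
    simp only [Finset.mem_image, Finset.mem_range, not_exists, not_and] at hx'
    refine ⟨fun i => if i = k then x else f i, ?_, ?_⟩
    · intro i hi
      by_cases hik : i = k
      · simp [hik, hx]
      · simp only [hik, if_false]; exact hf i (by omega)
    · intro i hi j hj
      by_cases hik : i = k <;> by_cases hjk : j = k
      · intro _; omega
      · simp only [hik, hjk, if_true, if_false]
        intro e; exact absurd e.symm (hx' j (by omega))
      · simp only [hik, hjk, if_true, if_false]
        intro e; exact absurd e (hx' i (by omega))
      · simp only [hik, hjk, if_false]
        exact hinj i (by omega) j (by omega)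

theorem theta_of_path {V : Type*} (G : SimpleGraph V) (r : ℕ) (p : ℕ → V) (w : V)
    (hadj : ∀ i < r + 1, G.Adj (p i) (p (i + 1)))
    (hinj : ∀ i ≤ r + 1, ∀ j ≤ r + 1, p i = p j → i = j)
    (hw : ∀ i ≤ r + 1, p i ≠ w)
    (h0 : G.Adj w (p 0)) (h1 : G.Adj w (p (r + 1))) (h2 : G.Adj (p 0) (p (r + 1))) :
    Contains G (theta r) := by
  refine ⟨⟨fun i => if i.val ≤ r + 1 then p i.val else w, ?_⟩, ?_⟩
  · intro i j h
    have hi := i.2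
    have hj := j.2
    apply Fin.ext
    by_cases a : i.val ≤ r + 1 <;> by_cases b : j.val ≤ r + 1
    · simp only [a, b, if_true] at h
      exact hinj _ a _ b h
    · simp only [a, b, if_true, if_false] at h
      exact absurd h (hw _ a)
    · simp only [a, b, if_true, if_false] at h
      exact absurd h.symm (hw _ b)
    · omega
  · have key : ∀ a b : Fin (r + 3), ((a.val + 1 = b.val ∧ b.val ≤ r + 1) ∨
      (a.val = 0 ∧ b.val = r + 1) ∨ (a.val = r + 2 ∧ (b.val = 0 ∨ b.val = r + 1))) →
      G.Adj (if a.val ≤ r + 1 then p a.val else w) (if b.val ≤ r + 1 then p b.val else w) := by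
      rintro a b (⟨h, h'⟩ | ⟨h, h'⟩ | ⟨h, h' | h'⟩)
      · rw [if_pos (by omega), if_pos h', ← h]
        exact hadj _ (by omega)
      · rw [if_pos (by omega), if_pos (by omega), h, h']
        exact h2
      · rw [if_neg (by omega), if_pos (by omega), h']
        exact h0
      · rw [if_neg (by omega), if_pos (by omega), h']
        exact h1
    intro a b hab
    rw [theta, SimpleGraph.fromRel_adj] at hab
    rcases hab.2 with h | h
    · exact key a b h
    · exact (key b a h).symm

/-- zig-zag version: `x 0, y 0, x 1, y 1, …` -/
theorem theta_of_zigzag {V : Type*} (G : SimpleGraph V) (r : ℕ) (x y : ℕ → V) (w : V)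
    (hxy : ∀ i, 2 * i + 1 ≤ r + 1 → G.Adj (x i) (y i))
    (hyx : ∀ i, 2 * i + 2 ≤ r + 1 → G.Adj (y i) (x (i + 1)))
    (hx : ∀ i j, 2 * i ≤ r + 1 → 2 * j ≤ r + 1 → x i = x j → i = j)
    (hy : ∀ i j, 2 * i + 1 ≤ r + 1 → 2 * j + 1 ≤ r + 1 → y i = y j → i = j)
    (hne : ∀ i j, 2 * i ≤ r + 1 → 2 * j + 1 ≤ r + 1 → x i ≠ y j)
    (hwx : ∀ i, 2 * i ≤ r + 1 → x i ≠ w)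
    (hwy : ∀ i, 2 * i + 1 ≤ r + 1 → y i ≠ w)
    (h0 : G.Adj w (x 0))
    (h1 : ∀ k, r + 1 = 2 * k → G.Adj w (x k) ∧ G.Adj (x 0) (x k))
    (h2 : ∀ k, r = 2 * k → G.Adj w (y k) ∧ G.Adj (x 0) (y k)) :
    Contains G (theta r) := by
  have pe : ∀ i, (fun i => if i % 2 = 0 then x (i / 2) else y (i / 2)) (2 * i) = x i := by
    intro i; simp
  have po : ∀ i, (fun i => if i % 2 = 0 then x (i / 2) else y (i / 2)) (2 * i + 1) = y i := by
    intro i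
    have : (2 * i + 1) / 2 = i := by omega
    have h2 : ¬ ((2 * i + 1) % 2 = 0) := by omega
    simp only [this, h2, if_false]
  generalize (fun i => if i % 2 = 0 then x (i / 2) else y (i / 2)) = p at pe po
  have par : ∀ i : ℕ, (∃ k, i = 2 * k) ∨ (∃ k, i = 2 * k + 1) := fun i => by
    rcases Nat.even_or_odd' i with ⟨k, h | h⟩
    · exact Or.inl ⟨k, h⟩
    · exact Or.inr ⟨k, h⟩
  apply theta_of_path G r p w
  · intro i hi
    rcases par i with ⟨k, rfl | rfl⟩ | ⟨k, rfl⟩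
    · rw [pe, po]; exact hxy k (by omega)
    · rw [po, show 2 * k + 1 + 1 = 2 * (k + 1) by ring, pe]; exact hyx k (by omega)
  · intro i hi j hj e
    rcases par i with ⟨k, rfl⟩ | ⟨k, rfl⟩ <;> rcases par j with ⟨l, rfl⟩ | ⟨l, rfl⟩
    · rw [pe, pe] at e; rw [hx k l (by omega) (by omega) e]
    · rw [pe, po] at e; exact absurd e (hne k l (by omega) (by omega))
    · rw [pe, po] at e; exact absurd e.symm (hne l k (by omega) (by omega))
    · rw [po, po] at e; rw [hy k l (by omega) (by omega) e]
  · intro i hi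
    rcases par i with ⟨k, rfl⟩ | ⟨k, rfl⟩
    · rw [pe]; exact hwx k (by omega)
    · rw [po]; exact hwy k (by omega)
  · have := pe 0
    simp only [Nat.mul_zero] at this
    rw [this]; exact h0
  · rcases par (r + 1) with ⟨k, h⟩ | ⟨k, h⟩
    · rw [h, pe]; exact (h1 k h).1
    · rw [h, po]; exact (h2 k (by omega)).1
  · have := pe 0
    simp only [Nat.mul_zero] at this
    rw [this]
    rcases par (r + 1) with ⟨k, h⟩ | ⟨k, h⟩
    · rw [h, pe]; exact (h1 k h).2
    · rw [h, po]; exact (h2 k (by omega)).2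

/-- `q 0, …, q m` is a path inside `S` -/
def IsPth {V : Type*} (G : SimpleGraph V) (S : Finset V) (m : ℕ) (q : ℕ → V) : Prop :=
  (∀ i < m, G.Adj (q i) (q (i + 1))) ∧ (∀ i ≤ m, ∀ j ≤ m, q i = q j → i = j) ∧
    ∀ i ≤ m, q i ∈ S

/-- a path on `r+2` vertices inside a neighbourhood gives a theta graph -/
theorem theta_of_nbr_path {V : Type*} (G : SimpleGraph V) (r : ℕ) (u : V) (S : Finset V)
    (hu : ∀ x ∈ S, G.Adj u x) (m : ℕ) (q : ℕ → V) (hq : IsPth G S m q) (hm : r + 1 ≤ m) :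
    Contains G (theta r) := by
  obtain ⟨hc, hn, hS⟩ := hq
  have hget : ∀ i ≤ m, G.Adj u (q i) := fun i hi => hu _ (hS i hi)
  refine theta_of_path G r (fun i => if i < r + 1 then q (i + 1) else u) (q 0) ?_ ?_ ?_ ?_ ?_ ?_
  · intro i hi
    by_cases h : i + 1 < r + 1
    · simp only [hi, h, if_true]
      exact hc (i + 1) (by omega)
    · simp only [hi, h, if_true, if_false]
      exact (hget _ (by omega)).symm
  · intro i hi j hj
    by_cases h : i < r + 1 <;> by_cases h' : j < r + 1
    · simp only [h, h', if_true]
      intro e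
      have := hn _ (by omega) _ (by omega) e
      omega
    · simp only [h, h', if_true, if_false]
      intro e
      exact absurd e (hget _ (by omega)).ne'
    · simp only [h, h', if_true, if_false]
      intro e
      exact absurd e (hget _ (by omega)).ne
    · intro _; omega
  · intro i hi
    by_cases h : i < r + 1
    · simp only [h, if_true]
      intro e
      have := hn _ (by omega) _ (by omega) e
      omega
    · simp only [h, if_false]
      exact (hget _ (by omega)).ne
  · simp only [Nat.zero_lt_succ, if_true]
    exact hc 0 (by omega)
  · simp only [lt_irrefl, if_false]
    exact (hget _ (by omega)).symm
  · simp only [Nat.zero_lt_succ, lt_irrefl, if_true, if_false]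
    exact (hget _ (by omega)).symm

theorem cycle_of_crossing {V : Type*} (G : SimpleGraph V) (S : Finset V) (m : ℕ) (q : ℕ → V)
    (hq : IsPth G S m q) (i : ℕ) (hi : i < m) (h0 : G.Adj (q 0) (q (i + 1)))
    (h1 : G.Adj (q m) (q i)) :
    ∃ c : ℕ → V, IsPth G S m c ∧ G.Adj (c m) (c 0) ∧ (∀ j ≤ m, ∃ t ≤ m, q j = c t) := by
  obtain ⟨hc, hn, hS⟩ := hq
  refine ⟨fun j => if j ≤ i then q j else q (m + i + 1 - j), ⟨?_, ?_, ?_⟩, ?_, ?_⟩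
  · intro j hj
    by_cases a : j + 1 ≤ i
    · simp only [a, if_true, show j ≤ i by omega]
      exact hc j hj
    · by_cases b : j ≤ i
      · simp only [a, b, if_true, if_false]
        rw [show m + i + 1 - (j + 1) = m by omega, show j = i by omega]
        exact h1.symm
      · simp only [a, b, if_false]
        have := hc (m + i + 1 - (j + 1)) (by omega)
        rw [show m + i + 1 - (j + 1) + 1 = m + i + 1 - j by omega] at this
        exact this.symm
  · intro j hj t ht
    by_cases a : j ≤ i <;> by_cases b : t ≤ i <;> simp only [a, b, if_true, if_false] <;> intro e
    · exact hn _ (by omega) _ (by omega) e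
    · have := hn _ (by omega) _ (by omega) e
      omega
    · have := hn _ (by omega) _ (by omega) e
      omega
    · have := hn _ (by omega) _ (by omega) e
      omega
  · intro j hj
    by_cases a : j ≤ i <;> simp only [a, if_true, if_false]
    · exact hS _ hj
    · exact hS _ (by omega)
  · simp only [Nat.zero_le, if_true, show ¬ m ≤ i by omega, if_false]
    rw [show m + i + 1 - m = i + 1 by omega]
    exact h0.symm
  · intro j hj
    by_cases a : j ≤ i
    · exact ⟨j, hj, by simp [a]⟩
    · refine ⟨m + i + 1 - j, by omega, ?_⟩
      simp only [show ¬ (m + i + 1 - j ≤ i) by omega, if_false]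
      congr 1
      omega

theorem longer_of_cycle {V : Type*} (G : SimpleGraph V) (S : Finset V) (m : ℕ) (c : ℕ → V)
    (hq : IsPth G S m c) (hcl : m = 0 ∨ G.Adj (c m) (c 0)) (t : ℕ) (ht : t ≤ m) (y : V)
    (hy : y ∈ S) (hty : G.Adj (c t) y) (hny : ∀ j ≤ m, c j ≠ y) :
    ∃ z, IsPth G S (m + 1) z := by
  obtain ⟨hc, hn, hS⟩ := hq
  refine ⟨fun j => if t + 1 + j ≤ m then c (t + 1 + j) else if j ≤ m then c (t + j - m) else y,
    ?_, ?_, ?_⟩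
  · intro j hj
    by_cases a : t + 1 + (j + 1) ≤ m
    · simp only [a, if_true, show t + 1 + j ≤ m by omega]
      exact hc (t + 1 + j) (by omega)
    · by_cases b : t + 1 + j ≤ m
      · simp only [a, b, if_true, if_false, show j + 1 ≤ m by omega]
        rw [show t + (j + 1) - m = 0 by omega, show t + 1 + j = m by omega]
        rcases hcl with h | h
        · omega
        · exact h
      · by_cases d : j + 1 ≤ m
        · simp only [a, b, d, if_true, if_false, show j ≤ m by omega]
          have := hc (t + j - m) (by omega)
          rw [show t + j - m + 1 = t + (j + 1) - m by omega] at this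
          exact this
        · simp only [a, b, d, if_true, if_false, show j ≤ m by omega]
          rw [show t + j - m = t by omega]
          exact hty
  · intro j hj k hk
    dsimp only
    split_ifs with a b d e f g h i <;> intro e'
    · have := hn _ (by omega) _ (by omega) e'
      omega
    · have := hn _ (by omega) _ (by omega) e'
      omega
    · exact absurd e' (hny _ (by omega))
    · have := hn _ (by omega) _ (by omega) e'
      omega
    · have := hn _ (by omega) _ (by omega) e'
      omega
    · exact absurd e' (hny _ (by omega))
    · exact absurd e'.symm (hny _ (by omega))
    · exact absurd e'.symm (hny _ (by omega))
    · omega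
  · intro j hj
    dsimp only
    split_ifs
    · exact hS _ (by omega)
    · exact hS _ (by omega)
    · exact hy

theorem exists_longest {V : Type*} (G : SimpleGraph V) (S : Finset V) (r : ℕ)
    (hr : ∀ m q, IsPth G S m q → m ≤ r) (hS : S.Nonempty) :
    ∃ m q, IsPth G S m q ∧ ¬ ∃ z, IsPth G S (m + 1) z := by
  by_contra hcon
  push Not at hcon
  have : ∀ m, ∃ q, IsPth G S m q := by
    intro m
    induction m with
    | zero =>
      obtain ⟨x, hx⟩ := hS
      exact ⟨fun _ => x, by simp, by simp, fun _ _ => hx⟩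
    | succ m ih =>
      obtain ⟨q, hq⟩ := ih
      exact hcon m q hq
  obtain ⟨q, hq⟩ := this (r + 1)
  have := hr _ _ hq
  omega

theorem sum_sdiff_deg {V : Type*} (G : SimpleGraph V) (S C : Finset V) (hC : C ⊆ S) (D : ℕ)
    (h : ∑ v ∈ C, (S.filter (G.Adj v)).card + ∑ v ∈ S \ C, (C.filter (G.Adj v)).card ≤ D) :
    ∑ v ∈ S, (S.filter (G.Adj v)).card ≤ ∑ v ∈ S \ C, ((S \ C).filter (G.Adj v)).card + D := by
  have h1 : ∑ v ∈ S, (S.filter (G.Adj v)).card =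
      ∑ v ∈ S \ C, (S.filter (G.Adj v)).card + ∑ v ∈ C, (S.filter (G.Adj v)).card :=
    (Finset.sum_sdiff hC).symm
  have h2 : ∀ v ∈ S \ C, (S.filter (G.Adj v)).card =
      ((S \ C).filter (G.Adj v)).card + (C.filter (G.Adj v)).card := by
    intro v _
    rw [← Finset.card_union_of_disjoint, ← Finset.filter_union, Finset.sdiff_union_of_subset hC]
    exact Finset.disjoint_filter_filter Finset.sdiff_disjoint
  rw [Finset.sum_congr rfl h2, Finset.sum_add_distrib] at h1
  omega

theorem card_filter_comm {V : Type*} (G : SimpleGraph V) (S T : Finset V) :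
    ∑ v ∈ S, (T.filter (G.Adj v)).card = ∑ v ∈ T, (S.filter (G.Adj v)).card := by
  simp only [Finset.card_filter]
  rw [Finset.sum_comm]
  simp only [G.adj_comm]

/-- Erdős–Gallai -/
theorem erdos_gallai {V : Type*} (G : SimpleGraph V) (r : ℕ) : ∀ (N : ℕ) (S : Finset V),
    S.card = N → (∀ m q, IsPth G S m q → m ≤ r) →
    ∑ v ∈ S, (S.filter (G.Adj v)).card ≤ r * S.card := by
  intro N
  induction N using Nat.strong_induction_on with
  | _ N ih =>
  intro S hSN hr
  rcases S.eq_empty_or_nonempty with rfl | hne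
  · simp
  have step : ∀ C : Finset V, C ⊆ S → C.Nonempty →
      ∑ v ∈ C, (S.filter (G.Adj v)).card + ∑ v ∈ S \ C, (C.filter (G.Adj v)).card ≤ r * C.card →
      ∑ v ∈ S, (S.filter (G.Adj v)).card ≤ r * S.card := by
    intro C hC hCne h
    have h1 := sum_sdiff_deg G S C hC _ h
    have hcard := Finset.card_sdiff_add_card_eq_card hC
    have hpos := hCne.card_pos
    have h2 := ih (S \ C).card (by omega) (S \ C) rfl (by
      intro m q hq
      exact hr m q ⟨hq.1, hq.2.1, fun i hi => Finset.sdiff_subset (hq.2.2 i hi)⟩)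
    rw [← hcard, mul_add]
    omega
  obtain ⟨m, q, hq, hmax⟩ := exists_longest G S r hr hne
  have hmr := hr m q hq
  by_cases hcr : ∃ i < m, G.Adj (q 0) (q (i + 1)) ∧ G.Adj (q m) (q i)
  · -- cycle
    obtain ⟨i, hi, h0, h1⟩ := hcr
    obtain ⟨c, hc, hcl, -⟩ := cycle_of_crossing G S m q hq i hi h0 h1
    have hclosed : ∀ t ≤ m, ∀ y ∈ S, G.Adj (c t) y → ∃ j ≤ m, c j = y := by
      intro t ht y hy hty
      by_contra hcon
      push Not at hcon
      exact hmax (longer_of_cycle G S m c hc (Or.inr hcl) t ht y hy hty hcon)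
    set C := (Finset.range (m + 1)).image c with hCdef
    have hCcard : C.card = m + 1 := by
      rw [hCdef, Finset.card_image_of_injOn, Finset.card_range]
      intro a ha b hb e
      simp at ha hb
      exact hc.2.1 a (by omega) b (by omega) e
    have hCS : C ⊆ S := by
      intro x hx
      simp only [hCdef, Finset.mem_image, Finset.mem_range] at hx
      obtain ⟨j, hj, rfl⟩ := hx
      exact hc.2.2 j (by omega)
    have hcl2 : ∀ x ∈ C, ∀ y ∈ S, G.Adj x y → y ∈ C := by
      intro x hx y hy hxy
      simp only [hCdef, Finset.mem_image, Finset.mem_range] at hx ⊢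
      obtain ⟨j, hj, rfl⟩ := hx
      obtain ⟨t, ht, e⟩ := hclosed j (by omega) y hy hxy
      exact ⟨t, by omega, e⟩
    apply step C hCS (Finset.card_pos.mp (by omega))
    have z : ∑ v ∈ S \ C, (C.filter (G.Adj v)).card = 0 := by
      apply Finset.sum_eq_zero
      intro v hv
      rw [Finset.card_eq_zero, Finset.filter_eq_empty_iff]
      intro x hx hvx
      rw [Finset.mem_sdiff] at hv
      exact hv.2 (hcl2 x hx v hv.1 hvx.symm)
    rw [z, add_zero, mul_comm, ← smul_eq_mul]
    apply Finset.sum_le_card_nsmul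
    intro v hv
    have : S.filter (G.Adj v) ⊆ C.erase v := by
      intro y hy
      rw [Finset.mem_filter] at hy
      exact Finset.mem_erase.mpr ⟨hy.2.ne', hcl2 v hv y hy.1 hy.2⟩
    have h2 := Finset.card_le_card this
    rw [Finset.card_erase_of_mem hv] at h2
    omega
  · push Not at hcr
    -- an endpoint of small degree
    have hend : ∀ x ∈ S, 2 * (S.filter (G.Adj x)).card ≤ r →
        ∑ v ∈ S, (S.filter (G.Adj v)).card ≤ r * S.card := by
      intro x hx hd
      apply step {x} (by simpa using hx) (by simp)
      have h1 : ∑ v ∈ S \ {x}, (({x} : Finset V).filter (G.Adj v)).card ≤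
          (S.filter (G.Adj x)).card := by
        rw [card_filter_comm]
        simp only [Finset.sum_singleton]
        exact Finset.card_le_card (Finset.filter_subset_filter _ Finset.sdiff_subset)
      simp only [Finset.sum_singleton, Finset.card_singleton, mul_one]
      omega
    have hd0 : (S.filter (G.Adj (q 0))).card ≤
        ((Finset.range m).filter fun i => G.Adj (q 0) (q (i + 1))).card := by
      apply le_trans (Finset.card_le_card _) (Finset.card_image_le (f := fun i => q (i + 1)))
      intro y hy
      rw [Finset.mem_filter] at hy
      by_contra hcon
      apply hmax
      refine ⟨fun j => if j = 0 then y else q (j - 1), ?_, ?_, ?_⟩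
      · intro i hi
        by_cases h : i = 0
        · simp [h, hy.2.symm]
        · simp only [h, if_false, Nat.succ_ne_zero, Nat.add_sub_cancel]
          have := hq.1 (i - 1) (by omega)
          rwa [show i - 1 + 1 = i by omega] at this
      · have hyq : ∀ j ≤ m, q j ≠ y := by
          intro j hj e
          apply hcon
          have : j ≠ 0 := by
            rintro rfl
            exact hy.2.ne e
          rw [Finset.mem_image]
          refine ⟨j - 1, ?_, ?_⟩
          · simp only [Finset.mem_filter, Finset.mem_range]
            rw [show j - 1 + 1 = j by omega, e]
            exact ⟨by omega, hy.2⟩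
          · rw [show j - 1 + 1 = j by omega, e]
        intro i hi j hj
        dsimp only
        split_ifs <;> intro e
        · omega
        · exact absurd e.symm (hyq _ (by omega))
        · exact absurd e (hyq _ (by omega))
        · have := hq.2.1 _ (by omega) _ (by omega) e
          omega
      · intro i hi
        dsimp only
        split_ifs
        · exact hy.1
        · exact hq.2.2 _ (by omega)
    have hdm : (S.filter (G.Adj (q m))).card ≤
        ((Finset.range m).filter fun i => G.Adj (q m) (q i)).card := by
      apply le_trans (Finset.card_le_card _) (Finset.card_image_le (f := fun i => q i))
      intro y hy
      rw [Finset.mem_filter] at hy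
      by_contra hcon
      apply hmax
      refine ⟨fun j => if j = m + 1 then y else q j, ?_, ?_, ?_⟩
      · intro i hi
        by_cases h : i = m
        · simp [h, hy.2]
        · simp only [show ¬ (i = m + 1) by omega, show ¬ (i + 1 = m + 1) by omega, if_false]
          exact hq.1 i (by omega)
      · have hyq : ∀ j ≤ m, q j ≠ y := by
          intro j hj e
          apply hcon
          have : j ≠ m := by
            rintro rfl
            exact hy.2.ne e
          rw [Finset.mem_image]
          refine ⟨j, ?_, e⟩
          simp only [Finset.mem_filter, Finset.mem_range]
          rw [e]
          exact ⟨by omega, hy.2⟩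
        intro i hi j hj
        dsimp only
        split_ifs <;> intro e
        · omega
        · exact absurd e.symm (hyq _ (by omega))
        · exact absurd e (hyq _ (by omega))
        · have := hq.2.1 _ (by omega) _ (by omega) e
          omega
      · intro i hi
        dsimp only
        split_ifs
        · exact hy.1
        · exact hq.2.2 _ (by omega)
    have hdisj : ((Finset.range m).filter fun i => G.Adj (q 0) (q (i + 1))).card +
        ((Finset.range m).filter fun i => G.Adj (q m) (q i)).card ≤ m := by
      rw [← Finset.card_union_of_disjoint]
      · refine le_trans (Finset.card_le_card (Finset.union_subset (Finset.filter_subset _ _)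
          (Finset.filter_subset _ _))) (by simp)
      · rw [Finset.disjoint_filter]
        intro i hi a b
        exact hcr i (Finset.mem_range.mp hi) a b
    by_cases hh : 2 * (S.filter (G.Adj (q 0))).card ≤ r
    · exact hend _ (hq.2.2 0 (by omega)) hh
    · exact hend _ (hq.2.2 m le_rfl) (by omega)

theorem conn_exists {V : Type*} (G : SimpleGraph V) (B : Finset V) (u : V) (τ m : ℕ) (α : ℕ → V)
    (hα : ∀ i ≤ m, B.card ≤ (B.filter (G.Adj (α i))).card + τ) (hb : 2 * τ + m + 1 ≤ B.card) :
    ∃ β : ℕ → V, (∀ i < m, β i ∈ B ∧ β i ≠ u ∧ G.Adj (α i) (β i) ∧ G.Adj (α (i + 1)) (β i)) ∧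
      (∀ i < m, ∀ j < m, β i = β j → i = j) := by
  have : Nonempty V := ⟨u⟩
  obtain ⟨β, h1, h2⟩ := sdr_exists m
    (fun i => ((B.filter (G.Adj (α i))) ∩ (B.filter (G.Adj (α (i + 1))))).erase u) (by
    intro i hi
    have e1 := Finset.card_union_add_card_inter (B.filter (G.Adj (α i)))
      (B.filter (G.Adj (α (i + 1))))
    have e2 : (B.filter (G.Adj (α i)) ∪ B.filter (G.Adj (α (i + 1)))).card ≤ B.card :=
      Finset.card_le_card (Finset.union_subset (Finset.filter_subset _ _)
        (Finset.filter_subset _ _))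
    have e3 := hα i (by omega)
    have e4 := hα (i + 1) (by omega)
    have e5 := Finset.pred_card_le_card_erase (a := u)
      (s := (B.filter (G.Adj (α i))) ∩ (B.filter (G.Adj (α (i + 1)))))
    omega)
  refine ⟨β, ?_, h2⟩
  intro i hi
  have := h1 i hi
  simp only [Finset.mem_erase, Finset.mem_inter, Finset.mem_filter] at this
  exact ⟨this.2.1.1, this.1, this.2.1.2, this.2.2.2⟩

theorem pick_exists {V : Type*} [Nonempty V] (M X : Finset V) (k : ℕ) (h : k + X.card ≤ M.card) :
    ∃ f : ℕ → V, (∀ i < k, f i ∈ M ∧ f i ∉ X) ∧ (∀ i < k, ∀ j < k, f i = f j → i = j) := by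
  obtain ⟨f, h1, h2⟩ := sdr_exists k (fun _ => M \ X) (by
    intro i _
    have := Finset.le_card_sdiff X M
    omega)
  exact ⟨f, fun i hi => Finset.mem_sdiff.mp (h1 i hi), h2⟩

section cfg

variable {V : Type*} (G : SimpleGraph V) (u : V) (A B M : Finset V) (τ k : ℕ)

theorem theta_even (hA : ∀ x ∈ A, G.Adj u x) (hB : ∀ x ∈ B, ¬ G.Adj u x) (hMA : M ⊆ A)
    (hM : ∀ x ∈ M, B.card ≤ (B.filter (G.Adj x)).card + τ) (hMc : k + 2 ≤ M.card)
    (hb : 2 * τ + k + 1 ≤ B.card) (v w : V) (hv : v ∈ M) (hw : w ∈ A) (hvw : G.Adj v w) :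
    Contains G (theta (2 * k)) := by
  have : Nonempty V := ⟨u⟩
  obtain ⟨f, hf, hfi⟩ := pick_exists M {v, w} k (by
    have : ({v, w} : Finset V).card ≤ 2 := Finset.card_le_two
    omega)
  simp only [Finset.mem_insert, Finset.mem_singleton, not_or] at hf
  have hα : ∃ α : ℕ → V, (∀ i ≤ k, α i ∈ M ∧ α i ≠ w) ∧ (∀ i ≤ k, ∀ j ≤ k, α i = α j → i = j) ∧
      α k = v := by
    refine ⟨fun i => if i = k then v else f i, ?_, ?_, by simp⟩
    · intro i hi
      dsimp only
      split_ifs with h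
      · exact ⟨hv, hvw.ne⟩
      · exact ⟨(hf i (by omega)).1, (hf i (by omega)).2.2⟩
    · intro i hi j hj
      dsimp only
      split_ifs with h h' h' <;> intro e
      · omega
      · exact absurd e.symm (hf j (by omega)).2.1
      · exact absurd e (hf i (by omega)).2.1
      · exact hfi _ (by omega) _ (by omega) e
  obtain ⟨α, hαM, hαi, hαk⟩ := hα
  obtain ⟨β, hβ, hβi⟩ := conn_exists G B u τ k α (fun i hi => hM _ (hαM i hi).1) hb
  have hAB : ∀ x ∈ A, ∀ y ∈ B, x ≠ y := by
    rintro x hx y hy rfl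
    exact hB x hy (hA x hx)
  have huA : ∀ x ∈ A, u ≠ x := fun x hx => (hA x hx).ne
  apply theta_of_zigzag G (2 * k) (fun i => if i = 0 then u else β (i - 1)) α w
  · intro i hi
    try dsimp only
    split_ifs with h
    · exact hA _ (hMA (hαM i (by omega)).1)
    · have := (hβ (i - 1) (by omega)).2.2.2
      rw [show i - 1 + 1 = i by omega] at this
      exact this.symm
  · intro i hi
    simp only [Nat.succ_ne_zero, if_false, Nat.add_sub_cancel]
    exact (hβ i (by omega)).2.2.1
  · intro i j hi hj
    try dsimp only
    split_ifs with h h' h' <;> intro e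
    · omega
    · exact absurd e.symm (hβ _ (by omega)).2.1
    · exact absurd e (hβ _ (by omega)).2.1
    · have := hβi _ (by omega) _ (by omega) e
      omega
  · intro i j hi hj e
    exact hαi i (by omega) j (by omega) e
  · intro i j hi hj
    try dsimp only
    have := hMA (hαM j (by omega)).1
    split_ifs with h
    · exact huA _ this
    · exact (hAB _ this _ (hβ _ (by omega)).1).symm
  · intro i hi
    try dsimp only
    split_ifs with h
    · exact huA _ hw
    · exact (hAB _ hw _ (hβ _ (by omega)).1).symm
  · intro i hi
    exact (hαM i (by omega)).2
  · simp only [if_true]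
    exact (hA _ hw).symm
  · intro k' h
    omega
  · intro k' h
    have : k' = k := by omega
    subst this
    simp only [if_true]
    rw [hαk]
    exact ⟨hvw.symm, hA _ (hMA hv)⟩

theorem theta_odd_one (r : ℕ) (hr : r + 1 = 2 * k) (hA : ∀ x ∈ A, G.Adj u x)
    (hB : ∀ x ∈ B, ¬ G.Adj u x) (hMA : M ⊆ A)
    (hM : ∀ x ∈ M, B.card ≤ (B.filter (G.Adj x)).card + τ) (hMc : k + 2 ≤ M.card)
    (hb : 2 * τ + k + 1 ≤ B.card) (v w : V) (hv : v ∈ M) (hw : w ∈ M) (hvw : G.Adj v w) :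
    Contains G (theta r) := by
  have : Nonempty V := ⟨u⟩
  obtain ⟨f, hf, hfi⟩ := pick_exists M {v, w} k (by
    have : ({v, w} : Finset V).card ≤ 2 := Finset.card_le_two
    omega)
  simp only [Finset.mem_insert, Finset.mem_singleton, not_or] at hf
  have hα : ∃ α : ℕ → V, (∀ i ≤ k, α i ∈ M) ∧ (∀ i ≤ k, ∀ j ≤ k, α i = α j → i = j) ∧
      α 0 = v ∧ α k = w := by
    refine ⟨fun i => if i = k then w else if i = 0 then v else f i, ?_, ?_, ?_, by simp⟩
    · intro i hi
      dsimp only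
      split_ifs with h h'
      · exact hw
      · exact hv
      · exact (hf i (by omega)).1
    · intro i hi j hj
      dsimp only
      split_ifs with h1 h2 h3 h4 h5 h6 h7 h8 <;> intro e
      · omega
      · exact absurd e hvw.ne'
      · exact absurd e.symm (hf j (by omega)).2.2
      · exact absurd e hvw.ne
      · omega
      · exact absurd e.symm (hf j (by omega)).2.1
      · exact absurd e (hf i (by omega)).2.2
      · exact absurd e (hf i (by omega)).2.1
      · exact hfi _ (by omega) _ (by omega) e
    · simp only [show ¬ (0 = k) by omega, if_false, if_true]
  obtain ⟨α, hαM, hαi, hα0, hαk⟩ := hα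
  obtain ⟨β, hβ, hβi⟩ := conn_exists G B u τ k α (fun i hi => hM _ (hαM i hi)) hb
  have hAB : ∀ x ∈ A, ∀ y ∈ B, x ≠ y := by
    rintro x hx y hy rfl
    exact hB x hy (hA x hx)
  have huA : ∀ x ∈ A, u ≠ x := fun x hx => (hA x hx).ne
  apply theta_of_zigzag G r α β u
  · intro i hi
    exact (hβ i (by omega)).2.2.1
  · intro i hi
    exact (hβ i (by omega)).2.2.2.symm
  · intro i j hi hj e
    exact hαi i (by omega) j (by omega) e
  · intro i j hi hj e
    exact hβi i (by omega) j (by omega) e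
  · intro i j hi hj
    exact hAB _ (hMA (hαM i (by omega))) _ (hβ j (by omega)).1
  · intro i hi
    exact (huA _ (hMA (hαM i (by omega)))).symm
  · intro i hi
    exact (hβ i (by omega)).2.1
  · exact hA _ (hMA (hαM 0 (by omega)))
  · intro k' h
    have : k' = k := by omega
    subst this
    rw [hα0, hαk]
    exact ⟨hA _ (hMA hw), hvw⟩
  · intro k' h
    omega

theorem theta_odd_two (r : ℕ) (hr : r + 1 = 2 * k) (hA : ∀ x ∈ A, G.Adj u x)
    (hB : ∀ x ∈ B, ¬ G.Adj u x) (hMA : M ⊆ A)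
    (hM : ∀ x ∈ M, B.card ≤ (B.filter (G.Adj x)).card + τ) (hMc : k + 2 ≤ M.card)
    (hb : 2 * τ + k + 1 ≤ B.card) (v a w : V) (hv : v ∈ A) (ha : a ∈ M) (hw : w ∈ A)
    (hva : G.Adj v a) (hvw : G.Adj v w) (haw : w ≠ a) :
    Contains G (theta r) := by
  have : Nonempty V := ⟨u⟩
  obtain ⟨f, hf, hfi⟩ := pick_exists M {v, w, a} (k - 1) (by
    have : ({v, w, a} : Finset V).card ≤ 3 := Finset.card_le_three
    omega)
  simp only [Finset.mem_insert, Finset.mem_singleton, not_or] at hf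
  have hα : ∃ α : ℕ → V, (∀ i < k, α i ∈ M ∧ α i ≠ w ∧ α i ≠ v) ∧
      (∀ i < k, ∀ j < k, α i = α j → i = j) ∧ α (k - 1) = a := by
    refine ⟨fun i => if i = k - 1 then a else f i, ?_, ?_, by simp⟩
    · intro i hi
      dsimp only
      split_ifs with h
      · exact ⟨ha, haw.symm, hva.ne'⟩
      · have := hf i (by omega)
        exact ⟨this.1, this.2.2.1, this.2.1⟩
    · intro i hi j hj
      dsimp only
      split_ifs with h h' h' <;> intro e
      · omega
      · exact absurd e.symm (hf j (by omega)).2.2.2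
      · exact absurd e (hf i (by omega)).2.2.2
      · exact hfi _ (by omega) _ (by omega) e
  obtain ⟨α, hαM, hαi, hαk⟩ := hα
  obtain ⟨β, hβ, hβi⟩ := conn_exists G B u τ (k - 1) α
    (fun i hi => hM _ (hαM i (by omega)).1) (by omega)
  have hAB : ∀ x ∈ A, ∀ y ∈ B, x ≠ y := by
    rintro x hx y hy rfl
    exact hB x hy (hA x hx)
  have huA : ∀ x ∈ A, u ≠ x := fun x hx => (hA x hx).ne
  apply theta_of_zigzag G r (fun i => if i = k then v else if i = 0 then u else β (i - 1)) α w
  · intro i hi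
    simp only [show ¬ (i = k) by omega, if_false]
    split_ifs with h
    · exact hA _ (hMA (hαM i (by omega)).1)
    · have := (hβ (i - 1) (by omega)).2.2.2
      rw [show i - 1 + 1 = i by omega] at this
      exact this.symm
  · intro i hi
    simp only [Nat.succ_ne_zero, if_false, Nat.add_sub_cancel]
    split_ifs with h
    · rw [show i = k - 1 by omega, hαk]
      exact hva.symm
    · exact (hβ i (by omega)).2.2.1
  · intro i j hi hj
    try dsimp only
    split_ifs with h1 h2 h3 h4 h5 h6 h7 h8 <;> intro e
    · omega
    · exact absurd e.symm (huA _ hv)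
    · exact absurd e (hAB _ hv _ (hβ _ (by omega)).1)
    · exact absurd e (huA _ hv)
    · omega
    · exact absurd e.symm (hβ _ (by omega)).2.1
    · exact absurd e.symm (hAB _ hv _ (hβ _ (by omega)).1)
    · exact absurd e (hβ _ (by omega)).2.1
    · have := hβi _ (by omega) _ (by omega) e
      omega
  · intro i j hi hj e
    exact hαi i (by omega) j (by omega) e
  · intro i j hi hj
    try dsimp only
    have := hαM j (by omega)
    split_ifs with h h'
    · exact this.2.2.symm
    · exact huA _ (hMA this.1)
    · exact (hAB _ (hMA this.1) _ (hβ _ (by omega)).1).symm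
  · intro i hi
    try dsimp only
    split_ifs with h h'
    · exact hvw.ne
    · exact huA _ hw
    · exact (hAB _ hw _ (hβ _ (by omega)).1).symm
  · intro i hi
    exact (hαM i (by omega)).2.1
  · simp only [show ¬ (0 = k) by omega, if_false, if_true]
    exact (hA _ hw).symm
  · intro k' h
    have : k' = k := by omega
    subst this
    simp only [if_true, show ¬ (0 = k') by omega, if_false]
    exact ⟨hvw.symm, hA _ hv⟩
  · intro k' h
    omega

theorem inner_bound (r : ℕ) (hr2 : 2 ≤ r) (hk : r = 2 * k ∨ r + 1 = 2 * k)
    (hfree : ¬ Contains G (theta r))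
    (hA : ∀ x ∈ A, G.Adj u x) (hB : ∀ x ∈ B, ¬ G.Adj u x)
    (hMdef : M = A.filter fun x => B.card ≤ (B.filter (G.Adj x)).card + τ)
    (hMc : k + 2 ≤ M.card) (hb : 2 * τ + k + 1 ≤ B.card) :
    ∑ v ∈ A, (A.filter (G.Adj v)).card ≤ r * (A \ M).card := by
  have hMA : M ⊆ A := by rw [hMdef]; exact Finset.filter_subset _ _
  have hM : ∀ x ∈ M, B.card ≤ (B.filter (G.Adj x)).card + τ := by
    intro x hx
    rw [hMdef, Finset.mem_filter] at hx
    exact hx.2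
  have key : ∀ m ∈ M, ∀ x ∈ A, G.Adj m x → x ∉ M ∧ (A.filter (G.Adj x)).card ≤ 1 := by
    intro m hm x hx hmx
    rcases hk with hk | hk
    · exfalso
      subst hk
      exact hfree (theta_even G u A B M τ k hA hB hMA hM hMc hb m x hm hx hmx)
    · constructor
      · intro hxM
        exact hfree (theta_odd_one G u A B M τ k r hk hA hB hMA hM hMc hb m x hm hxM hmx)
      · by_contra hc
        push Not at hc
        obtain ⟨w, hw, hwm⟩ := Finset.exists_mem_ne hc m
        rw [Finset.mem_filter] at hw
        exact hfree (theta_odd_two G u A B M τ k r hk hA hB hMA hM hMc hb x m w hx hm hw.1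
          hmx.symm hw.2 hwm)
  set L1 := (A \ M).filter fun x => ∃ m ∈ M, G.Adj m x with hL1
  set L2 := (A \ M) \ L1 with hL2
  have hL1s : L1 ⊆ A \ M := Finset.filter_subset _ _
  have e1 : ∑ v ∈ A, (A.filter (G.Adj v)).card = (∑ v ∈ L2, (A.filter (G.Adj v)).card +
      ∑ v ∈ L1, (A.filter (G.Adj v)).card) + ∑ v ∈ M, (A.filter (G.Adj v)).card := by
    rw [hL2, Finset.sum_sdiff hL1s, Finset.sum_sdiff hMA]
  have hd1 : ∀ v ∈ L1, (A.filter (G.Adj v)).card ≤ 1 := by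
    intro v hv
    rw [hL1, Finset.mem_filter, Finset.mem_sdiff] at hv
    obtain ⟨⟨hvA, hvM⟩, m, hm, hmv⟩ := hv
    exact (key m hm v hvA hmv).2
  have e2 : ∑ v ∈ L1, (A.filter (G.Adj v)).card ≤ L1.card := by
    have := Finset.sum_le_card_nsmul L1 _ 1 hd1
    simpa using this
  have e3 : ∑ v ∈ M, (A.filter (G.Adj v)).card ≤ L1.card := by
    have h1 : ∑ v ∈ M, (A.filter (G.Adj v)).card ≤ ∑ v ∈ M, (L1.filter (G.Adj v)).card := by
      apply Finset.sum_le_sum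
      intro v hv
      apply Finset.card_le_card
      intro x hx
      rw [Finset.mem_filter] at hx ⊢
      refine ⟨?_, hx.2⟩
      rw [hL1, Finset.mem_filter, Finset.mem_sdiff]
      exact ⟨⟨hx.1, (key v hv x hx.1 hx.2).1⟩, v, hv, hx.2⟩
    rw [card_filter_comm G M L1] at h1
    refine h1.trans (le_trans (Finset.sum_le_sum fun v _ => ?_) e2)
    exact Finset.card_le_card (Finset.filter_subset_filter _ hMA)
  have e4 : ∑ v ∈ L2, (A.filter (G.Adj v)).card ≤ r * L2.card := by
    have h1 : ∑ v ∈ L2, (A.filter (G.Adj v)).card ≤ ∑ v ∈ L2, (L2.filter (G.Adj v)).card := by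
      apply Finset.sum_le_sum
      intro v hv
      apply Finset.card_le_card
      intro x hx
      rw [Finset.mem_filter] at hx ⊢
      refine ⟨?_, hx.2⟩
      have hv' := hv
      rw [hL2, Finset.mem_sdiff, Finset.mem_sdiff] at hv'
      have hnoM : ∀ m ∈ M, ¬ G.Adj m v := by
        intro m hm hmv
        apply hv'.2
        rw [hL1, Finset.mem_filter, Finset.mem_sdiff]
        exact ⟨hv'.1, m, hm, hmv⟩
      rw [hL2, Finset.mem_sdiff, Finset.mem_sdiff]
      refine ⟨⟨hx.1, fun hxM => hnoM x hxM hx.2.symm⟩, fun hxL => ?_⟩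
      have hx1 := hd1 x hxL
      rw [hL1, Finset.mem_filter, Finset.mem_sdiff] at hxL
      obtain ⟨_, m, hm, hmx⟩ := hxL
      have : m = v := by
        apply Finset.card_le_one.mp hx1
        · rw [Finset.mem_filter]; exact ⟨hMA hm, hmx.symm⟩
        · rw [Finset.mem_filter]; exact ⟨hv'.1.1, hx.2.symm⟩
      exact hv'.1.2 (this ▸ hm)
    refine h1.trans (erdos_gallai G r _ L2 rfl ?_)
    intro m q hq
    by_contra hc
    refine hfree (theta_of_nbr_path G r u L2 ?_ m q hq (by omega))
    intro x hx
    rw [hL2, Finset.mem_sdiff, Finset.mem_sdiff] at hx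
    exact hA x hx.1.1
  have e5 : L2.card + L1.card = (A \ M).card := Finset.card_sdiff_add_card_eq_card hL1s
  rw [← e5, mul_add]
  have : 2 * L1.card ≤ r * L1.card := Nat.mul_le_mul_right _ hr2
  omega

end cfg

theorem exists_heavy {V : Type*} [Fintype V] (G : SimpleGraph V) (n : ℕ) (hn : Fintype.card V = n)
    (he : n ^ 2 / 4 < edgeCount G) :
    ∃ u, n ^ 2 < 4 * ∑ v ∈ Finset.univ.filter (G.Adj u), (Finset.univ.filter (G.Adj v)).card := by
  have hdeg : ∑ v : V, (Finset.univ.filter (G.Adj v)).card = 2 * edgeCount G := by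
    have h1 := G.sum_degrees_eq_twice_card_edges
    have h2 : edgeCount G = G.edgeFinset.card := by
      rw [edgeCount, ← SimpleGraph.coe_edgeFinset, Set.ncard_coe_finset]
    rw [h2, ← h1]
    apply Finset.sum_congr rfl
    intro v _
    rw [← SimpleGraph.card_neighborFinset_eq_degree, SimpleGraph.neighborFinset_eq_filter]
  by_contra hcon
  push Not at hcon
  have hsum : 4 * ∑ u : V, ∑ v ∈ Finset.univ.filter (G.Adj u),
      (Finset.univ.filter (G.Adj v)).card ≤ n * n ^ 2 := by
    rw [Finset.mul_sum]
    have := Finset.sum_le_card_nsmul Finset.univ (fun u => 4 * ∑ v ∈ Finset.univ.filter (G.Adj u),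
      (Finset.univ.filter (G.Adj v)).card) (n ^ 2) (fun u _ => hcon u)
    rwa [Finset.card_univ, hn, smul_eq_mul] at this
  have hsq : ∑ u : V, ∑ v ∈ Finset.univ.filter (G.Adj u), (Finset.univ.filter (G.Adj v)).card =
      ∑ v : V, (Finset.univ.filter (G.Adj v)).card ^ 2 := by
    simp only [Finset.sum_filter]
    rw [Finset.sum_comm]
    apply Finset.sum_congr rfl
    intro v _
    rw [← Finset.sum_filter, Finset.sum_const, smul_eq_mul, sq]
    simp only [G.adj_comm]
  have hcs := sq_sum_le_card_mul_sum_sq (s := (Finset.univ : Finset V))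
    (f := fun v => (Finset.univ.filter (G.Adj v)).card)
  rw [Finset.card_univ, hn, hdeg] at hcs
  rw [hsq] at hsum
  have h4 : n ^ 2 + 1 ≤ 4 * edgeCount G := by omega
  have h5 : (n ^ 2 + 1) * (n ^ 2 + 1) ≤ (4 * edgeCount G) * (4 * edgeCount G) :=
    Nat.mul_le_mul h4 h4
  have h6 := Nat.mul_le_mul_left n hsum
  nlinarith [h5, h6, hcs]

/-- final arithmetic, first case -/
theorem arith_one (r k n a b t l E F : ℤ) (hk : r = 2 * k ∨ (r + 1 = 2 * k ∧ 10 * r ≤ n))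
    (hr : 2 ≤ r) (hn : 7 * r ≤ n) (hab : a + b = n) (hb : 0 ≤ b) (ht : b ≤ 2 * t + k + 2)
    (hl : 0 ≤ l) (hla : l ≤ a) (hF : F + (t + 1) * l ≤ a * b) (hE : E ≤ r * l)
    (h : n ^ 2 < 4 * (E + F)) : False := by
  subst hab
  have h1 : (a - b) ^ 2 < 4 * ((r - t - 1) * l) := by nlinarith
  have h2 : 2 * (b - k) ≤ 4 * (t + 1) := by linarith
  have h3 : 4 * ((r - t - 1) * l) ≤ (4 * r + 2 * k - 2 * b) * l := by nlinarith
  have h4 : 0 < 4 * r + 2 * k - 2 * b := by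
    by_contra hc
    push Not at hc
    nlinarith [sq_nonneg (a - b)]
  have h5 : (a - b) ^ 2 < (4 * r + 2 * k - 2 * b) * a := by nlinarith
  have h6 : 2 * k ≤ r + 1 := by rcases hk with h | h <;> linarith [h]
  have h7 : (a - b) ^ 2 < (5 * r + 1 - 2 * b) * a := by nlinarith
  rcases hk with hk | ⟨hk, hk'⟩
  · have h8 : (a - b) ^ 2 < (5 * r - 2 * b) * a := by nlinarith
    nlinarith [sq_nonneg (a - 5 * r), sq_nonneg (a - b), sq_nonneg (4 * a - 19 * r), sq_nonneg (a + b - 7 * r)]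
  · nlinarith [sq_nonneg (a - 5 * r), sq_nonneg (a - b)]

theorem arith_two (r k n a b t l E F : ℤ) (hk : r = 2 * k ∨ (r + 1 = 2 * k ∧ 10 * r ≤ n))
    (hr : 2 ≤ r) (hn : 7 * r ≤ n) (hab : a + b = n) (hb : k + 1 ≤ b) (ht : b ≤ 2 * t + k + 2)
    (hl : a - k - 1 ≤ l) (hl0 : 0 ≤ l) (hF : F + (t + 1) * l ≤ a * b) (hE : E ≤ r * a)
    (h : n ^ 2 < 4 * (E + F)) : False := by
  subst hab
  have h1 : (a - b) ^ 2 + 4 * ((t + 1) * l) < 4 * (r * a) := by nlinarith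
  have h2 : 2 * (b - k) ≤ 4 * (t + 1) := by linarith
  have h3 : 2 * ((b - k) * (a - k - 1)) ≤ 4 * ((t + 1) * l) := by nlinarith
  have h4 : (a - b) ^ 2 + 2 * ((b - k) * (a - k - 1)) < 4 * (r * a) := by linarith
  rcases hk with hk | ⟨hk, hk'⟩
  · subst hk
    have h5 := Int.add_one_le_iff.mpr h4
    have hk1 : 1 ≤ k := by linarith
    have hd : 0 ≤ a + b - 14 * k := by linarith
    have hd2 : 0 ≤ (a + b - 14 * k) * (a + b - 14 * k - 2 + 16 * k) :=
      mul_nonneg hd (by linarith)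
    have hkk : 0 ≤ k * (k - 1) := mul_nonneg (by linarith) (by linarith)
    nlinarith [sq_nonneg (a - b - 4 * k + 1)]
  · have : r = 2 * k - 1 := by linarith
    subst this
    have hk1 : 2 ≤ k := by linarith
    have hd : 0 ≤ a + b - 20 * k + 10 := by linarith
    have hd2 : 0 ≤ (a + b - 20 * k + 10) * (28 * k - 18) := mul_nonneg hd (by linarith)
    have hkk : 0 ≤ (k - 2) * (148 * k + 84) := mul_nonneg (by linarith) (by linarith)
    nlinarith [sq_nonneg (a - b - 4 * k + 3), sq_nonneg (a + b - 20 * k + 10)]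

theorem arith_three (r k n a b E F : ℤ) (hk : r = 2 * k ∨ (r + 1 = 2 * k ∧ 10 * r ≤ n))
    (hr : 2 ≤ r) (hn : 7 * r ≤ n) (hab : a + b = n) (hb : 0 ≤ b) (hbk : b ≤ k)
    (hF : F ≤ a * b) (hE : E ≤ r * a)
    (h : n ^ 2 < 4 * (E + F)) : False := by
  subst hab
  have h1 : (a - b) ^ 2 < 4 * (r * a) := by nlinarith
  have h2 : 2 * k ≤ r + 1 := by rcases hk with h | h <;> linarith [h]
  nlinarith

theorem upper_big {V : Type*} [Fintype V] (G : SimpleGraph V) (r k n : ℕ) (hr2 : 2 ≤ r)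
    (hk : r = 2 * k ∨ (r + 1 = 2 * k ∧ 10 * r ≤ n)) (hn7 : 7 * r ≤ n)
    (hn : Fintype.card V = n) (hfree : ¬ Contains G (theta r)) : edgeCount G ≤ n ^ 2 / 4 := by
  by_contra hcon
  push Not at hcon
  obtain ⟨u, hu⟩ := exists_heavy G n hn hcon
  set A := Finset.univ.filter (G.Adj u) with hAdef
  set B := Finset.univ.filter (fun x => ¬ G.Adj u x) with hBdef
  have hA : ∀ x ∈ A, G.Adj u x := by intro x hx; simpa [hAdef] using hx
  have hB : ∀ x ∈ B, ¬ G.Adj u x := by intro x hx; simpa [hBdef] using hx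
  have hab : A.card + B.card = n := by
    rw [hAdef, hBdef, Finset.card_filter_add_card_filter_not, Finset.card_univ, hn]
  have hdeg : ∀ v, (Finset.univ.filter (G.Adj v)).card =
      (A.filter (G.Adj v)).card + (B.filter (G.Adj v)).card := by
    intro v
    rw [← Finset.card_filter_add_card_filter_not (s := Finset.univ.filter (G.Adj v)) (G.Adj u),
      hAdef, hBdef, Finset.filter_comm, Finset.filter_comm (p := G.Adj v)]
  simp only [hdeg, Finset.sum_add_distrib] at hu
  have hE : ∑ v ∈ A, (A.filter (G.Adj v)).card ≤ r * A.card := by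
    apply erdos_gallai G r _ A rfl
    intro m q hq
    by_contra hm
    exact hfree (theta_of_nbr_path G r u A hA m q hq (by omega))
  set E := ∑ v ∈ A, (A.filter (G.Adj v)).card with hEdef
  set F := ∑ v ∈ A, (B.filter (G.Adj v)).card with hFdef
  have hkZ : (r : ℤ) = 2 * k ∨ ((r : ℤ) + 1 = 2 * k ∧ 10 * (r : ℤ) ≤ n) := by
    exact_mod_cast hk
  have hk' : r = 2 * k ∨ r + 1 = 2 * k := by
    rcases hk with h | h
    · exact Or.inl h
    · exact Or.inr h.1
  by_cases hbk : B.card ≤ k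
  · have hF : F ≤ A.card * B.card := by
      rw [hFdef, ← smul_eq_mul]
      exact Finset.sum_le_card_nsmul _ _ _ (fun v _ => Finset.card_filter_le _ _)
    exact arith_three r k n A.card B.card E F hkZ (by exact_mod_cast hr2) (by exact_mod_cast hn7)
      (by exact_mod_cast hab) (by positivity) (by exact_mod_cast hbk) (by exact_mod_cast hF)
      (by exact_mod_cast hE) (by exact_mod_cast hu)
  · push Not at hbk
    obtain ⟨τ, ht1, ht2⟩ : ∃ τ, 2 * τ + k + 1 ≤ B.card ∧ B.card ≤ 2 * τ + k + 2 :=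
      ⟨(B.card - k - 1) / 2, by omega, by omega⟩
    set M := A.filter (fun x => B.card ≤ (B.filter (G.Adj x)).card + τ) with hMdef
    have hMA : M ⊆ A := Finset.filter_subset _ _
    have hcard : (A \ M).card + M.card = A.card := Finset.card_sdiff_add_card_eq_card hMA
    have hF : F + (τ + 1) * (A \ M).card ≤ A.card * B.card := by
      have e1 : F = ∑ v ∈ A \ M, (B.filter (G.Adj v)).card + ∑ v ∈ M, (B.filter (G.Adj v)).card :=
        (Finset.sum_sdiff hMA).symm
      have e2 : ∑ v ∈ M, (B.filter (G.Adj v)).card ≤ M.card * B.card := by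
        rw [← smul_eq_mul]
        exact Finset.sum_le_card_nsmul _ _ _ (fun v _ => Finset.card_filter_le _ _)
      have e3 : ∑ v ∈ A \ M, ((B.filter (G.Adj v)).card + (τ + 1)) ≤ (A \ M).card * B.card := by
        rw [← smul_eq_mul]
        apply Finset.sum_le_card_nsmul
        intro v hv
        rw [Finset.mem_sdiff, hMdef] at hv
        have := hv.2
        have h3 : ¬ (B.card ≤ (B.filter (G.Adj v)).card + τ) := fun h => this (Finset.mem_filter.mpr ⟨hv.1, h⟩)
        omega
      rw [Finset.sum_add_distrib, Finset.sum_const, smul_eq_mul] at e3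
      rw [e1, ← hcard]
      nlinarith
    have hin := fun h => inner_bound G u A B M τ k r hr2 hk' hfree hA hB hMdef h ht1
    rw [← hEdef] at hin
    clear_value E F M A B
    generalize (A \ M).card = l at *
    generalize A.card = a at *
    generalize B.card = b at *
    generalize M.card = m at *
    zify at hu hE hF ht2 hab hn7 hr2
    by_cases hMc : k + 2 ≤ m
    · have hin' := hin hMc
      zify at hin'
      exact arith_one r k n a b τ l E F hkZ hr2 hn7 hab (by omega) ht2 (by omega) (by omega)
        hF hin' hu
    · exact arith_two r k n a b τ l E F hkZ hr2 hn7 hab (by omega) ht2 (by omega) (by omega)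
        hF hE hu

theorem upper_one {V : Type*} [Fintype V] (G : SimpleGraph V) (n : ℕ) (hn10 : 10 ≤ n)
    (hn : Fintype.card V = n) (hfree : ¬ Contains G (theta 1)) : edgeCount G ≤ n ^ 2 / 4 := by
  by_contra hcon
  push Not at hcon
  obtain ⟨u, hu⟩ := exists_heavy G n hn hcon
  set A := Finset.univ.filter (G.Adj u) with hAdef
  set B := Finset.univ.filter (fun x => ¬ G.Adj u x) with hBdef
  have hA : ∀ x ∈ A, G.Adj u x := by intro x hx; simpa [hAdef] using hx
  have hab : A.card + B.card = n := by
    rw [hAdef, hBdef, Finset.card_filter_add_card_filter_not, Finset.card_univ, hn]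
  have hdeg : ∀ v, (Finset.univ.filter (G.Adj v)).card =
      (A.filter (G.Adj v)).card + (B.filter (G.Adj v)).card := by
    intro v
    rw [← Finset.card_filter_add_card_filter_not (s := Finset.univ.filter (G.Adj v)) (G.Adj u),
      hAdef, hBdef, Finset.filter_comm, Finset.filter_comm (p := G.Adj v)]
  have hb1 : 1 ≤ B.card := Finset.card_pos.mpr ⟨u, by simp [hBdef]⟩
  simp only [hdeg, Finset.sum_add_distrib] at hu
  have hdA : ∀ v ∈ A, (A.filter (G.Adj v)).card ≤ 1 := by
    intro v hv
    by_contra hc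
    push Not at hc
    obtain ⟨x, hx, y, hy, hxy⟩ := Finset.one_lt_card.mp hc
    rw [Finset.mem_filter] at hx hy
    apply hfree
    apply theta_of_path G 1 (fun i => if i = 0 then u else if i = 1 then x else v) y
    · intro i hi
      interval_cases i
      · simpa using hA x hx.1
      · simpa using hx.2.symm
    · have n1 := (hA x hx.1).ne
      have n2 := (hA v hv).ne
      have n3 := hx.2.ne
      intro i hi j hj
      interval_cases i <;> interval_cases j <;> simp [n1, n2, n3, n1.symm, n2.symm, n3.symm]
    · have n1 := (hA y hy.1).ne
      have n3 := hy.2.ne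
      intro i hi
      interval_cases i <;> simp [n1, n3, hxy]
    · simpa using (hA y hy.1).symm
    · simpa using hy.2.symm
    · simpa using hA v hv
  have hdB : ∀ v ∈ A, ∀ w ∈ A, G.Adj v w →
      (B.filter (G.Adj v)).card + (B.filter (G.Adj w)).card ≤ B.card + 1 := by
    intro v hv w hw hvw
    rw [← Finset.card_union_add_card_inter]
    apply Nat.add_le_add
    · exact Finset.card_le_card (Finset.union_subset (Finset.filter_subset _ _)
        (Finset.filter_subset _ _))
    · have : (B.filter (G.Adj v) ∩ B.filter (G.Adj w)) ⊆ {u} := by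
        intro z hz
        obtain ⟨hz1, hz2⟩ := Finset.mem_inter.mp hz
        rw [Finset.mem_filter] at hz1 hz2
        rw [Finset.mem_singleton]
        by_contra hzu
        apply hfree
        apply theta_of_path G 1 (fun i => if i = 0 then v else if i = 1 then z else w) u
        · intro i hi
          interval_cases i
          · simpa using hz1.2
          · simpa using hz2.2.symm
        · have n1 := hz1.2.ne
          have n2 := hz2.2.ne
          have n3 := hvw.ne
          intro i hi j hj
          interval_cases i <;> interval_cases j <;> simp [n1, n2, n3, n1.symm, n2.symm, n3.symm]
        · have n1 := (hA v hv).ne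
          have n2 := (hA w hw).ne
          intro i hi
          interval_cases i <;> simp [n1.symm, n2.symm, hzu]
        · simpa using hA v hv
        · simpa using hA w hw
        · simpa using hvw
      simpa using Finset.card_le_card this
  set E := ∑ v ∈ A, (A.filter (G.Adj v)).card with hEdef
  set F := ∑ v ∈ A, (B.filter (G.Adj v)).card with hFdef
  have hEa : E ≤ A.card := by
    have := Finset.sum_le_card_nsmul A _ 1 hdA
    simpa using this
  have hS1 : ∑ v ∈ A, (A.filter (G.Adj v)).card * (B.filter (G.Adj v)).card =
      ∑ v ∈ A, ∑ w ∈ A.filter (G.Adj v), (B.filter (G.Adj v)).card := by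
    simp [Finset.sum_const]
  have hS2 : ∑ v ∈ A, (A.filter (G.Adj v)).card * (B.filter (G.Adj v)).card =
      ∑ v ∈ A, ∑ w ∈ A.filter (G.Adj v), (B.filter (G.Adj w)).card := by
    rw [hS1]
    simp only [Finset.sum_filter]
    rw [Finset.sum_comm]
    simp only [G.adj_comm]
  have hS : 2 * ∑ v ∈ A, (A.filter (G.Adj v)).card * (B.filter (G.Adj v)).card ≤
      E * (B.card + 1) := by
    rw [two_mul]
    nth_rewrite 1 [hS1]
    rw [hS2, ← Finset.sum_add_distrib, hEdef, Finset.sum_mul]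
    apply Finset.sum_le_sum
    intro v hv
    rw [← Finset.sum_add_distrib, ← smul_eq_mul]
    apply Finset.sum_le_card_nsmul
    intro w hw
    rw [Finset.mem_filter] at hw
    exact hdB v hv w hw.1 hw.2
  have hFb : F + B.card * E ≤ B.card * A.card +
      ∑ v ∈ A, (A.filter (G.Adj v)).card * (B.filter (G.Adj v)).card := by
    rw [hFdef, hEdef, Finset.mul_sum, ← Finset.sum_add_distrib, mul_comm B.card A.card,
      ← smul_eq_mul A.card, ← Finset.sum_const, ← Finset.sum_add_distrib]
    apply Finset.sum_le_sum
    intro v hv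
    have h1 := hdA v hv
    have h2 : (B.filter (G.Adj v)).card ≤ B.card := Finset.card_filter_le _ _
    interval_cases (A.filter (G.Adj v)).card <;> simp <;> omega
  generalize (∑ v ∈ A, (A.filter (G.Adj v)).card * (B.filter (G.Adj v)).card) = S at hS hFb
  clear_value E F
  generalize A.card = a at *
  generalize B.card = b at *
  subst hab
  have hz : ((a : ℤ) - b) ^ 2 < E * (6 - 2 * b) := by
    zify at hu hS hFb
    nlinarith
  by_cases hb3 : 3 ≤ b
  · zify at hb3
    nlinarith [sq_nonneg ((a : ℤ) - b), mul_nonneg (Int.natCast_nonneg E) (sub_nonneg.mpr hb3)]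
  · zify at hEa hn10
    have : b = 1 ∨ b = 2 := by omega
    rcases this with rfl | rfl
    · push_cast at *
      nlinarith
    · push_cast at *
      nlinarith

theorem lower_exists (r n : ℕ) :
    ∃ G : SimpleGraph (Fin n), ¬ Contains G (theta r) ∧ edgeCount G = n ^ 2 / 4 := by
  refine ⟨turanGraph n 2, ?_, ?_⟩
  · rintro ⟨f, hf⟩
    have h1 := hf ⟨0, by omega⟩ ⟨r + 1, by omega⟩ (by rw [theta, SimpleGraph.fromRel_adj, Ne, Fin.ext_iff]; simp)
    have h2 := hf ⟨r + 2, by omega⟩ ⟨r + 1, by omega⟩ (by rw [theta, SimpleGraph.fromRel_adj, Ne, Fin.ext_iff]; simp)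
    have h3 := hf ⟨r + 2, by omega⟩ ⟨0, by omega⟩ (by rw [theta, SimpleGraph.fromRel_adj, Ne, Fin.ext_iff]; simp)
    simp only [turanGraph] at h1 h2 h3
    omega
  · have h := SimpleGraph.card_edgeFinset_turanGraph (n := n) (r := 2)
    rw [edgeCount, ← SimpleGraph.coe_edgeFinset, Set.ncard_coe_finset]
    convert h using 1
    rcases Nat.even_or_odd' n with ⟨m, rfl | rfl⟩
    · simp
    · have : (2 * m + 1) % 2 = 1 := by omega
      rw [this]
      simp
      have e : (2 * m + 1) ^ 2 = 4 * (m ^ 2 + m) + 1 := by ring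
      omega

end helpers

/-- Corollary 1.11 (ii): `ex(n, θ_{r+1}) = ⌊n²/4⌋` for `n ≥ 10r` if `r` is odd and
`n ≥ 7r` if `r` is even. -/
theorem stmt7 (r n : ℕ) (hr : 1 ≤ r) (hodd : Odd r → 10 * r ≤ n)
    (heven : Even r → 7 * r ≤ n) :
    (∀ G : SimpleGraph (Fin n), ¬ Contains G (theta r) → edgeCount G ≤ n ^ 2 / 4) ∧
    (∃ G : SimpleGraph (Fin n), ¬ Contains G (theta r) ∧ edgeCount G = n ^ 2 / 4) := by
  refine ⟨?_, lower_exists r n⟩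
  intro G hG
  rcases Nat.even_or_odd r with he | ho
  · have h7 := heven he
    obtain ⟨k, hk⟩ := he
    exact upper_big G r k n (by omega) (Or.inl (by omega)) h7 (Fintype.card_fin n) hG
  · have h10 := hodd ho
    by_cases h1 : r = 1
    · subst h1
      exact upper_one G n (by omega) (Fintype.card_fin n) hG
    · obtain ⟨k, hk⟩ := ho
      exact upper_big G r (k + 1) n (by omega) (Or.inr ⟨by omega, h10⟩) (by omega)
        (Fintype.card_fin n) hG
end

section
/- Let H be any graph and let n ≥ k ≥ 1 be integers. Suppose that the Turán graph T_{n,k} is H-free and that every H-free graph G on n vertices satisfies ρ(G) ≤ ρ(T_{n,k}) (i.e., T_{n,k} is extremal with respect to the maximum spectral radius among H-free graphs of order n). Then every H-free graph G on n vertices satisfies e(G) ≤ e(T_{n,k}); in other words, ex(n,H) = e(T_{n,k}). -/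
open SimpleGraph Finset

attribute [local instance] Classical.propDecidable

open SimpleGraph Finset

lemma aux_upper {n : ℕ} (G : SimpleGraph (Fin n)) (x : Fin n → ℝ) (hx : ∀ i, 0 < x i) (l : ℝ)
    (hl : 0 ≤ l) (h : ∀ i, ∑ j ∈ G.neighborFinset i, x j ≤ l * x i) :
    adjSpectralRadius G ≤ l := by
  unfold adjSpectralRadius
  refine Real.sSup_le ?_ hl
  intro μ hμ
  rw [← Matrix.spectrum_toLin', ← Module.End.hasEigenvalue_iff_mem_spectrum] at hμ
  obtain ⟨y, hy⟩ := hμ.exists_hasEigenvector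
  have hy0 : y ≠ 0 := hy.2
  have hyA : ∀ i, ∑ j ∈ G.neighborFinset i, y j = μ * y i := by
    intro i
    have := congrFun hy.apply_eq_smul i
    rw [Matrix.toLin'_apply, adjMatrix_mulVec_apply] at this
    simpa using this
  obtain ⟨i0, hi0⟩ := Function.ne_iff.mp hy0
  obtain ⟨i, -, hi⟩ := Finset.exists_max_image univ (fun i => |y i| / x i) ⟨i0, mem_univ _⟩
  have hM : 0 < |y i| / x i :=
    lt_of_lt_of_le (div_pos (abs_pos.mpr hi0) (hx i0)) (hi i0 (mem_univ _))
  have hyi : |y i| = |y i| / x i * x i := by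
    rw [div_mul_cancel₀ _ (hx i).ne']
  have h1 : |μ| * |y i| ≤ l * |y i| := by
    rw [← abs_mul, ← hyA i]
    calc _ ≤ ∑ j ∈ G.neighborFinset i, |y j| := Finset.abs_sum_le_sum_abs _ _
      _ ≤ ∑ j ∈ G.neighborFinset i, |y i| / x i * x j :=
        Finset.sum_le_sum fun j _ => (div_le_iff₀ (hx j)).1 (hi j (mem_univ _))
      _ = |y i| / x i * ∑ j ∈ G.neighborFinset i, x j := by rw [Finset.mul_sum]
      _ ≤ |y i| / x i * (l * x i) := mul_le_mul_of_nonneg_left (h i) hM.le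
      _ = l * (|y i| / x i * x i) := by ring
      _ = l * |y i| := by rw [← hyi]
  have hpos : 0 < |y i| := by rw [hyi]; exact mul_pos hM (hx i)
  exact (le_abs_self μ).trans (le_of_mul_le_mul_right h1 hpos)

lemma aux_lower {n : ℕ} (G : SimpleGraph (Fin n)) :
    (∑ v, (G.degree v : ℝ)) ≤ n * adjSpectralRadius G := by
  have hA : (G.adjMatrix ℝ).IsHermitian := by
    rw [Matrix.IsHermitian, Matrix.conjTranspose_eq_transpose_of_trivial, transpose_adjMatrix]
  have hps : (algebraMap ℝ (Matrix (Fin n) (Fin n) ℝ) (adjSpectralRadius G)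
      - G.adjMatrix ℝ).PosSemidef := by
    rw [Matrix.posSemidef_iff_isHermitian_and_spectrum_nonneg]
    constructor
    · refine Matrix.IsHermitian.sub ?_ hA
      rw [Matrix.algebraMap_eq_diagonal]
      exact Matrix.isHermitian_diagonal _
    · rw [← spectrum.singleton_sub_eq]
      rintro _ ⟨a, ha, b, hb, rfl⟩
      rw [Set.mem_singleton_iff] at ha
      subst ha
      have : b ≤ adjSpectralRadius G := le_csSup (Matrix.finite_real_spectrum).bddAbove hb
      simpa using this
  have := hps.dotProduct_mulVec_nonneg (fun _ => 1)
  rw [Matrix.sub_mulVec, Matrix.algebraMap_eq_diagonal] at this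
  simp only [dotProduct, Pi.sub_apply, Matrix.mulVec_diagonal, adjMatrix_mulVec_apply] at this
  simpa using this

lemma aux_edge {n : ℕ} (G : SimpleGraph (Fin n)) :
    (∑ v, (G.degree v : ℝ)) = 2 * edgeCount G := by
  have h := G.sum_degrees_eq_twice_card_edges
  have h2 : edgeCount G = #G.edgeFinset := by
    unfold edgeCount
    rw [← coe_edgeFinset, Set.ncard_coe_finset]
  rw [h2]
  exact_mod_cast h

lemma aux_multi {n : ℕ} (hn : 0 < n) (G : SimpleGraph (Fin n))
    (h1 : ∀ u v, G.degree u ≤ G.degree v + 1)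
    (h2 : ∀ u v, ¬ G.Adj u v → G.degree u = G.degree v) :
    n * adjSpectralRadius G < ∑ v, (G.degree v : ℝ) + 2 := by
  obtain ⟨u, -, hu⟩ := Finset.exists_max_image univ (fun i => G.degree i) ⟨⟨0, hn⟩, mem_univ _⟩
  obtain ⟨D, hD⟩ : ∃ D : ℝ, D = (G.degree u : ℝ) := ⟨_, rfl⟩
  set d : Fin n → ℝ := fun v => D - G.degree v with hd
  have hd01 : ∀ v, d v = 0 ∨ d v = 1 := by
    intro v
    have a := hu v (mem_univ _)
    have b := h1 u v
    simp only [hd, hD]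
    rcases Nat.lt_or_ge (G.degree v) (G.degree u) with c | c
    · right
      have : G.degree u = G.degree v + 1 := by omega
      rw [this]; push_cast; ring
    · left
      have : G.degree u = G.degree v := by omega
      rw [this]; ring
  set b : ℝ := ∑ v, d v with hb
  have hb0 : 0 ≤ b := Finset.sum_nonneg fun v _ => by rcases hd01 v with h | h <;> rw [h] <;> norm_num
  have hbn : b ≤ n := by
    calc b ≤ ∑ v : Fin n, (1 : ℝ) :=
          Finset.sum_le_sum fun v _ => by rcases hd01 v with h | h <;> rw [h] <;> norm_num
      _ = n := by simp
  have hbD : b = n * D - ∑ v, (G.degree v : ℝ) := by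
    simp [hb, hd, Finset.sum_sub_distrib]
  have hnr : (1 : ℝ) ≤ n := by exact_mod_cast hn
  have hN : ∀ v, ∑ w ∈ G.neighborFinset v, d w = b - (n - G.degree v) * d v := by
    intro v
    have e : ∑ w ∈ (G.neighborFinset v)ᶜ, d w = (n - G.degree v) * d v := by
      rw [Finset.sum_congr rfl (g := fun _ => d v)]
      · rw [Finset.sum_const, Finset.card_compl, card_neighborFinset_eq_degree, nsmul_eq_mul,
          Nat.cast_sub (G.degree_lt_card_verts v).le]
        simp
      · intro w hw
        simp only [Finset.mem_compl, mem_neighborFinset] at hw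
        simp only [hd, h2 v w hw]
    have := Finset.sum_add_sum_compl (G.neighborFinset v) d
    rw [e] at this
    linarith
  set c : ℝ := 1 / (n + 1) with hc
  have hc0 : 0 < c := by positivity
  have hcn : c * (n + 1) = 1 := by rw [hc]; field_simp
  have hcx : c < 1 := by nlinarith
  have hl : 0 ≤ D - c * b := by
    rcases Nat.eq_zero_or_pos (G.degree u) with h | h
    · have : ∀ v, d v = 0 := by
        intro v
        have a := hu v (mem_univ _)
        have : G.degree v = 0 := by omega
        simp [hd, hD, h, this]
      have hbz : b = 0 := by simp [hb, this]
      rw [hbz]; simp [hD]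
    · have : (1 : ℝ) ≤ D := by rw [hD]; exact_mod_cast h
      nlinarith
  have key : adjSpectralRadius G ≤ D - c * b := by
    refine aux_upper G (fun v => 1 - c * d v) ?_ _ hl ?_
    · intro v
      rcases hd01 v with h | h <;> simp only [h] <;> linarith
    · intro v
      rw [Finset.sum_sub_distrib, ← Finset.mul_sum, hN]
      simp only [Finset.sum_const, card_neighborFinset_eq_degree, nsmul_eq_mul, mul_one]
      have hv : (G.degree v : ℝ) = D - d v := by simp [hd]
      rw [hv]
      rcases hd01 v with h | h <;> simp only [h]
      · linarith
      · nlinarith [mul_nonneg (sq_nonneg c) hb0]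
  have : n * adjSpectralRadius G ≤ n * (D - c * b) := mul_le_mul_of_nonneg_left key (by linarith)
  nlinarith

lemma aux_turan (n k : ℕ) (hk : 1 ≤ k) (G : SimpleGraph (Fin n)) (hG : G = turanGraph n k) :
    (∀ u v, G.degree u ≤ G.degree v + 1) ∧
    (∀ u v, ¬ G.Adj u v → G.degree u = G.degree v) := by
  have h : G.IsTuranMaximal k := by
    subst hG
    convert isTuranMaximal_turanGraph (n := n) hk
  refine ⟨fun u v => ?_, fun u v => h.degree_eq_of_not_adj⟩
  have e := h.isEquipartition (h.finpartition.part_mem.2 (mem_univ v))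
    (h.finpartition.part_mem.2 (mem_univ u))
  rw [h.degree_eq_card_sub_part_card, h.degree_eq_card_sub_part_card]
  omega

/-- Fact 1.3: if `T_{n,k}` is `H`-free and spectrally extremal among `H`-free graphs of
order `n`, then it is also extremal for the number of edges: `ex(n,H) = e(T_{n,k})`. -/
theorem stmt11 {V : Type*} (H : SimpleGraph V) (n k : ℕ) (hk : 1 ≤ k) (hn : k ≤ n)
    (hTfree : ¬ Contains (turanGraph n k) H)
    (hext : ∀ G : SimpleGraph (Fin n), ¬ Contains G H →
      adjSpectralRadius G ≤ adjSpectralRadius (turanGraph n k)) :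
    ∀ G : SimpleGraph (Fin n), ¬ Contains G H →
      edgeCount G ≤ edgeCount (turanGraph n k) := by
  intro G hG
  obtain ⟨h1, h2⟩ := aux_turan n k hk _ rfl
  have a := aux_multi (by omega) (turanGraph n k) h1 h2
  have b := aux_lower G
  have c := hext G hG
  rw [aux_edge] at a b
  have d : (n : ℝ) * adjSpectralRadius G ≤ n * adjSpectralRadius (turanGraph n k) :=
    mul_le_mul_of_nonneg_left c (Nat.cast_nonneg n)
  have e : (edgeCount G : ℝ) < edgeCount (turanGraph n k) + 1 := by linarith
  have f : edgeCount G < edgeCount (turanGraph n k) + 1 := by exact_mod_cast e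
  omega
end
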